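/- There is no state ρ^{ABCD} of a quadripartite quantum system on finite-dimensional Hilbert spaces, and no real number t > 0, such that the entropy vector of ρ^{ABCD} equals t · (3, 3, 3, 3, 4, 4, 4, 4, 4, 6, 5, 5, 5, 5, 2), where the coordinates list the entropies of the marginals A, B, C, D, AB, AC, AD, BC, BD, CD, ABC, ABD, ACD, BCD, ABCD in that order. -/

import Mathlib

/-!
The entropy vector of ray II saturates strong subadditivity for `I(A:C|B)`, `I(B:C|A)` and
`I(A:B|D)`, and saturates subadditivity for `I(C:D)`. These four equalities force
`ρ^{ABC} = ρ^{AB} ⊗ ρ^C` (`entropy_ABC_eq`), so `S(ABC) = S(AB) + S(C)`, i.e. `5t = 4t + 3t`,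
contradicting `t > 0`.

*Equality in strong subadditivity.* If `I(A:C|B) = 0` then
`ρ^{ABC} = ρ^{BC} (ρ^B)⁻¹ ρ^{AB}`, with a pseudo-inverse (`markov_of_entropy_eq`). With
`σ = ρ^{AB} ⊗ 1`, the hypothesis says that the relative entropy of `ρ^{ABC}` and `σ` is unchanged
by the partial trace over `A`. Let `F(t)` be the maximum over matrices `X` of the concave quadratic
form `2 Re Tr X* ρ - Tr σ X X* - t Tr ρ X* X` (`quadForm`, `quadMax`), where `ρ = ρ^{ABC}`.
Restricting to `1 ⊗ X` shows that `F` does not increase under the partial trace. In eigenbases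
`F(t)` is a finite sum `∑ c / (x + t)`, and the relative entropy is minus the matching sum
`∑ c log x`; a primitive in `t` of the difference of the two functions `F` is then monotone on
`[0, ∞)`, and it vanishes at `0` and at infinity (`sum_div_eq_of_sum_log_eq`). Hence the two
functions agree at `t = 0`, so the maximiser of the smaller problem solves the larger one, and its
stationarity equation is the factorisation.

*Consequences.* Fix `c, c'` and let `T` be the block of `ρ^{ABC}` at `(c, c')`. By `I(A:C|B) = 0`
and `I(B:C|A) = 0`, `T = x ρ^{AB} = y ρ^{AB}` with `x` acting on `B` and `y` on `A`. Since an
identity `Z ρ^X = 0` lifts to `Z ρ = 0` (`lift_mul_eq_zero`), also `x ρ = y ρ`. By `I(A:B|D) = 0`,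
the action of `x` on `ρ^{AD}` after tracing out `B` is that of some `e` on `D`, so `y ρ = e ρ`
(`exists_actD_eq_actA`). Put `μ = ρ^C(c, c') = Tr y ρ^{AB}`. Moving the second factor `y*` in
`Tr y ρ^{AB} y*` over to `D` and using `ρ^{CD} = ρ^C ⊗ ρ^D` gives `Tr y ρ^{AB} y* = |μ|²`, whence
`Tr (y - μ) ρ^{AB} (y - μ)* = 0` and `T = μ ρ^{AB}` (`marABC_block_eq`).
-/

open scoped BigOperators ComplexOrder

/-- Von Neumann entropy (base 2) of a matrix: for a Hermitian matrix, the Shannon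
entropy of its eigenvalues; junk value `0` for non-Hermitian matrices. -/
noncomputable def vNEntropy {n : Type*} [Fintype n] [DecidableEq n] (M : Matrix n n ℂ) : ℝ :=
  if h : M.IsHermitian then -∑ i, (h.eigenvalues i) * Real.logb 2 (h.eigenvalues i) else 0

/-- A density matrix: positive semidefinite with trace one. -/
def IsState {n : Type*} [Fintype n] [DecidableEq n] (M : Matrix n n ℂ) : Prop :=
  M.PosSemidef ∧ M.trace = 1

section Quad

variable {A B C D : Type*} [Fintype A] [DecidableEq A] [Fintype B] [DecidableEq B]
  [Fintype C] [DecidableEq C] [Fintype D] [DecidableEq D]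
  (ρ : Matrix (A × B × C × D) (A × B × C × D) ℂ)

/-- Entropies of the 15 marginals of a quadripartite state. -/
noncomputable def SA : ℝ :=
  vNEntropy (Matrix.of fun a a' : A => ∑ b, ∑ c, ∑ d, ρ (a, b, c, d) (a', b, c, d))
noncomputable def SB : ℝ :=
  vNEntropy (Matrix.of fun b b' : B => ∑ a, ∑ c, ∑ d, ρ (a, b, c, d) (a, b', c, d))
noncomputable def SC : ℝ :=
  vNEntropy (Matrix.of fun c c' : C => ∑ a, ∑ b, ∑ d, ρ (a, b, c, d) (a, b, c', d))
noncomputable def SD : ℝ :=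
  vNEntropy (Matrix.of fun d d' : D => ∑ a, ∑ b, ∑ c, ρ (a, b, c, d) (a, b, c, d'))
noncomputable def SAB : ℝ :=
  vNEntropy (Matrix.of fun p q : A × B => ∑ c, ∑ d, ρ (p.1, p.2, c, d) (q.1, q.2, c, d))
noncomputable def SAC : ℝ :=
  vNEntropy (Matrix.of fun p q : A × C => ∑ b, ∑ d, ρ (p.1, b, p.2, d) (q.1, b, q.2, d))
noncomputable def SAD : ℝ :=
  vNEntropy (Matrix.of fun p q : A × D => ∑ b, ∑ c, ρ (p.1, b, c, p.2) (q.1, b, c, q.2))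
noncomputable def SBC : ℝ :=
  vNEntropy (Matrix.of fun p q : B × C => ∑ a, ∑ d, ρ (a, p.1, p.2, d) (a, q.1, q.2, d))
noncomputable def SBD : ℝ :=
  vNEntropy (Matrix.of fun p q : B × D => ∑ a, ∑ c, ρ (a, p.1, c, p.2) (a, q.1, c, q.2))
noncomputable def SCD : ℝ :=
  vNEntropy (Matrix.of fun p q : C × D => ∑ a, ∑ b, ρ (a, b, p.1, p.2) (a, b, q.1, q.2))
noncomputable def SABC : ℝ :=
  vNEntropy (Matrix.of fun p q : A × B × C =>
    ∑ d, ρ (p.1, p.2.1, p.2.2, d) (q.1, q.2.1, q.2.2, d))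
noncomputable def SABD : ℝ :=
  vNEntropy (Matrix.of fun p q : A × B × D =>
    ∑ c, ρ (p.1, p.2.1, c, p.2.2) (q.1, q.2.1, c, q.2.2))
noncomputable def SACD : ℝ :=
  vNEntropy (Matrix.of fun p q : A × C × D =>
    ∑ b, ρ (p.1, b, p.2.1, p.2.2) (q.1, b, q.2.1, q.2.2))
noncomputable def SBCD : ℝ :=
  vNEntropy (Matrix.of fun p q : B × C × D =>
    ∑ a, ρ (a, p.1, p.2.1, p.2.2) (a, q.1, q.2.1, q.2.2))
noncomputable def SABCD : ℝ := vNEntropy ρ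

end Quad


open Matrix
open scoped Kronecker

set_option linter.unusedSectionVars false

/-! ### A scalar lemma on logarithmic sums -/

lemma hasDerivAt_sum_log {K : Type*} [Fintype K] (c x : K → ℝ) (hx : ∀ i, c i ≠ 0 → 0 < x i)
    (t : ℝ) (ht : 0 ≤ t) :
    HasDerivAt (fun t => ∑ i, c i * Real.log (x i + t)) (∑ i, c i / (x i + t)) t := by
  apply HasDerivAt.fun_sum
  intro i _
  by_cases h : c i = 0
  · simp only [h, zero_mul, zero_div]; exact hasDerivAt_const _ _
  · have h1 : x i + t ≠ 0 := by have := hx i h; positivity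
    have := ((hasDerivAt_id t).const_add (x i)).log h1
    simpa [div_eq_mul_inv] using this.const_mul (c i)

lemma tendsto_sum_log_sub {K : Type*} [Fintype K] (c x : K → ℝ) :
    Filter.Tendsto (fun t => ∑ i, c i * Real.log (x i + t) - (∑ i, c i) * Real.log t)
      Filter.atTop (nhds 0) := by
  have h1 : Filter.Tendsto (fun t : ℝ => ∑ i, c i * (Real.log (x i + t) - Real.log t))
      Filter.atTop (nhds (∑ i : K, c i * 0)) := by
    apply tendsto_finsetSum
    intro i _
    apply Filter.Tendsto.const_mul
    have := Real.tendsto_log_comp_add_sub_log (x i)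
    simpa [add_comm] using this
  simp only [mul_zero, Finset.sum_const_zero] at h1
  refine h1.congr fun t => ?_
  rw [Finset.sum_mul, ← Finset.sum_sub_distrib]
  exact Finset.sum_congr rfl fun i _ => by ring

/-- If `∑ c / (x + t)` dominates `∑ c' / (x' + t)` for all `t > 0`, while the total weights and the
logarithmic sums `∑ c log x` and `∑ c' log x'` agree, then the two sums also agree at `t = 0`.
The difference of the primitives `∑ c log (x + t)` is monotone and vanishes at both ends of
`[0, ∞)`, so its derivative at `0` is zero. -/
lemma sum_div_eq_of_sum_log_eq {I J : Type*} [Fintype I] [Fintype J] (c x : I → ℝ) (c' x' : J → ℝ)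
    (hx : ∀ i, c i ≠ 0 → 0 < x i)
    (hx' : ∀ i, c' i ≠ 0 → 0 < x' i)
    (hsum : ∑ i, c i = ∑ i, c' i)
    (hlog : ∑ i, c i * Real.log (x i) = ∑ i, c' i * Real.log (x' i))
    (hF : ∀ t : ℝ, 0 < t → ∑ i, c' i / (x' i + t) ≤ ∑ i, c i / (x i + t)) :
    ∑ i, c i / x i = ∑ i, c' i / x' i := by
  set h : ℝ → ℝ := fun t => ∑ i, c i * Real.log (x i + t) - ∑ i, c' i * Real.log (x' i + t)
    with hh
  have hder : ∀ t, 0 ≤ t → HasDerivAt h (∑ i, c i / (x i + t) - ∑ i, c' i / (x' i + t)) t :=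
    fun t ht => (hasDerivAt_sum_log c x hx t ht).sub (hasDerivAt_sum_log c' x' hx' t ht)
  have hmono : MonotoneOn h (Set.Ici 0) := by
    apply monotoneOn_of_deriv_nonneg (convex_Ici 0)
    · exact fun t ht => (hder t ht).continuousAt.continuousWithinAt
    · intro t ht
      rw [interior_Ici] at ht
      exact (hder t (le_of_lt ht)).differentiableAt.differentiableWithinAt
    · intro t ht
      rw [interior_Ici] at ht
      rw [(hder t (le_of_lt ht)).deriv]
      exact sub_nonneg.2 (hF t ht)
  have h0 : h 0 = 0 := by simp [hh, hlog]
  have hlim : Filter.Tendsto h Filter.atTop (nhds 0) := by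
    have := (tendsto_sum_log_sub c x).sub (tendsto_sum_log_sub c' x')
    rw [hsum, sub_zero] at this
    refine this.congr fun t => ?_
    simp only [hh]; ring
  have hz : ∀ t ∈ Set.Ici (0 : ℝ), h t = 0 := by
    intro t ht
    have h1 : 0 ≤ h t := h0 ▸ hmono Set.self_mem_Ici ht ht
    have h2 : h t ≤ 0 := by
      apply ge_of_tendsto hlim
      filter_upwards [Filter.eventually_ge_atTop t] with s hs
      exact hmono ht (le_trans (show (0 : ℝ) ≤ t from ht) hs) hs
    exact le_antisymm h2 h1
  have d1 := (hder 0 le_rfl).hasDerivWithinAt (s := Set.Ici 0)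
  have d2 : HasDerivWithinAt h 0 (Set.Ici 0) 0 :=
    (hasDerivWithinAt_const (0 : ℝ) (Set.Ici 0) (0 : ℝ)).congr hz h0
  have := (uniqueDiffOn_Ici (0 : ℝ) 0 Set.self_mem_Ici).eq_deriv _ d1 d2
  simp only [add_zero] at this
  linarith

/-! ### Diagonalisation and entropy -/

/-- `U` is unitary and diagonalises `M` with real spectrum `p`, listed along the columns of `U`. -/
structure Diagonalizes {n : Type*} [Fintype n] [DecidableEq n] (M U : Matrix n n ℂ) (p : n → ℝ) :
    Prop where
  left : Uᴴ * U = 1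
  right : U * Uᴴ = 1
  eq : M = U * diagonal (fun i => (p i : ℂ)) * Uᴴ

section
variable {n m k : Type*} [Fintype n] [DecidableEq n] [Fintype m] [DecidableEq m]
  [Fintype k] [DecidableEq k]

lemma Matrix.IsHermitian.exists_diagonalizes {M : Matrix n n ℂ} (h : M.IsHermitian) :
    ∃ U, Diagonalizes M U h.eigenvalues := by
  refine ⟨h.eigenvectorUnitary, ?_, ?_, ?_⟩
  · exact (Matrix.mem_unitaryGroup_iff').1 h.eigenvectorUnitary.2
  · exact (Matrix.mem_unitaryGroup_iff).1 h.eigenvectorUnitary.2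
  · have := h.spectral_theorem
    rw [Unitary.conjStarAlgAut_apply] at this
    exact this

lemma Matrix.PosSemidef.exists_diagonalizes {M : Matrix n n ℂ} (h : M.PosSemidef) :
    ∃ U p, Diagonalizes M U p ∧ ∀ i, 0 ≤ p i := by
  obtain ⟨U, hU⟩ := h.isHermitian.exists_diagonalizes
  exact ⟨U, _, hU, h.eigenvalues_nonneg⟩

lemma Diagonalizes.isHermitian {M U : Matrix n n ℂ} {p : n → ℝ} (h : Diagonalizes M U p) :
    M.IsHermitian := by
  rw [h.eq]
  simp only [Matrix.IsHermitian, conjTranspose_mul, conjTranspose_conjTranspose, mul_assoc,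
    diagonal_conjTranspose]
  congr 3
  ext i
  simp

lemma Diagonalizes.charpoly {M U : Matrix n n ℂ} {p : n → ℝ} (h : Diagonalizes M U p) :
    M.charpoly = ∏ i, (Polynomial.X - Polynomial.C (p i : ℂ)) := by
  rw [h.eq, charpoly_mul_comm, ← mul_assoc, h.left, one_mul, charpoly_diagonal]

/-- The entropy may be computed from any diagonalisation, since the spectrum is the multiset of roots
of the characteristic polynomial. -/
lemma Diagonalizes.entropy {M U : Matrix n n ℂ} {p : n → ℝ} (h : Diagonalizes M U p) :
    vNEntropy M * Real.log 2 = ∑ i, Real.negMulLog (p i) := by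
  have hH := h.isHermitian
  have h1 : (Finset.univ.val.map fun i => ((hH.eigenvalues i : ℝ) : ℂ))
      = Finset.univ.val.map fun i => ((p i : ℝ) : ℂ) := by
    have e := hH.charpoly_eq.symm.trans h.charpoly
    have e2 := congrArg Polynomial.roots e
    rw [Polynomial.roots_prod _ _ (Finset.prod_ne_zero_iff.2 fun i _ => Polynomial.X_sub_C_ne_zero _),
      Polynomial.roots_prod _ _ (Finset.prod_ne_zero_iff.2 fun i _ => Polynomial.X_sub_C_ne_zero _)]
      at e2
    simpa [Polynomial.roots_X_sub_C, Multiset.bind_singleton] using e2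
  have h2 : ∑ i, Real.negMulLog (hH.eigenvalues i) = ∑ i, Real.negMulLog (p i) := by
    have := congrArg (fun s : Multiset ℂ => (s.map fun z => Real.negMulLog z.re).sum) h1
    simpa [Multiset.map_map, Function.comp_def] using this
  rw [← h2, vNEntropy, dif_pos hH, neg_mul, Finset.sum_mul, ← Finset.sum_neg_distrib]
  refine Finset.sum_congr rfl fun i _ => ?_
  have : Real.log 2 ≠ 0 := by positivity
  rw [Real.negMulLog, Real.logb]
  field_simp

lemma Diagonalizes.submatrix {M U : Matrix n n ℂ} {p : n → ℝ} (h : Diagonalizes M U p)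
    (e : m ≃ n) : Diagonalizes (M.submatrix e e) (U.submatrix e e) (p ∘ e) where
  left := by rw [conjTranspose_submatrix, submatrix_mul_equiv, h.left, submatrix_one_equiv]
  right := by rw [conjTranspose_submatrix, submatrix_mul_equiv, h.right, submatrix_one_equiv]
  eq := by
    have : diagonal (fun i => ((p ∘ e) i : ℂ)) = (diagonal fun i => (p i : ℂ)).submatrix e e := by
      rw [submatrix_diagonal_equiv]; rfl
    rw [this, conjTranspose_submatrix, submatrix_mul_equiv, submatrix_mul_equiv, ← h.eq]

lemma vNEntropy_submatrix {M : Matrix n n ℂ} (hM : M.IsHermitian) (e : m ≃ n) :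
    vNEntropy (M.submatrix e e) = vNEntropy M := by
  obtain ⟨U, hU⟩ := hM.exists_diagonalizes
  have h2 : Real.log 2 ≠ 0 := by positivity
  apply mul_right_cancel₀ h2
  rw [hU.entropy, (hU.submatrix e).entropy]
  exact e.sum_comp (fun i => Real.negMulLog (hM.eigenvalues i))

lemma Diagonalizes.kronecker {M U : Matrix n n ℂ} {p : n → ℝ} {N V : Matrix m m ℂ} {q : m → ℝ}
    (hM : Diagonalizes M U p) (hN : Diagonalizes N V q) :
    Diagonalizes (M ⊗ₖ N) (U ⊗ₖ V) (fun i => p i.1 * q i.2) where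
  left := by rw [conjTranspose_kronecker, ← mul_kronecker_mul, hM.left, hN.left, one_kronecker_one]
  right := by
    rw [conjTranspose_kronecker, ← mul_kronecker_mul, hM.right, hN.right, one_kronecker_one]
  eq := by
    have : (diagonal fun i : n × m => ((p i.1 * q i.2 : ℝ) : ℂ))
        = (diagonal fun i => (p i : ℂ)) ⊗ₖ (diagonal fun i => (q i : ℂ)) := by
      rw [diagonal_kronecker_diagonal]; simp
    rw [this, conjTranspose_kronecker, ← mul_kronecker_mul, ← mul_kronecker_mul, ← hM.eq, ← hN.eq]

lemma Diagonalizes.trace {M U : Matrix n n ℂ} {p : n → ℝ} (h : Diagonalizes M U p) :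
    M.trace = ((∑ i, p i : ℝ) : ℂ) := by
  rw [h.eq, Matrix.trace_mul_comm, ← mul_assoc, h.left, one_mul, trace_diagonal]
  simp

lemma vNEntropy_kronecker {M : Matrix n n ℂ} {N : Matrix m m ℂ} (hM : M.IsHermitian)
    (hN : N.IsHermitian) (tM : M.trace = 1) (tN : N.trace = 1) :
    vNEntropy (M ⊗ₖ N) = vNEntropy M + vNEntropy N := by
  obtain ⟨U, hU⟩ := hM.exists_diagonalizes
  obtain ⟨V, hV⟩ := hN.exists_diagonalizes
  have h2 : Real.log 2 ≠ 0 := by positivity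
  apply mul_right_cancel₀ h2
  have t1 : ∑ i, hM.eigenvalues i = 1 := by
    have := hU.trace; rw [tM] at this; exact_mod_cast this.symm
  have t2 : ∑ i, hN.eigenvalues i = 1 := by
    have := hV.trace; rw [tN] at this; exact_mod_cast this.symm
  rw [add_mul, hU.entropy, hV.entropy, (hU.kronecker hV).entropy, Fintype.sum_prod_type]
  simp only [Real.negMulLog_mul, Finset.sum_add_distrib, ← Finset.mul_sum, ← Finset.sum_mul, t1, t2,
    one_mul]

/-- The entropy of a state of a trivial system vanishes. -/
lemma vNEntropy_of_unique [Unique n] {M : Matrix n n ℂ} (hM : M.trace = 1) : vNEntropy M = 0 := by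
  have h : Diagonalizes M 1 (fun _ => 1) := by
    refine ⟨by simp, by simp, ?_⟩
    ext i j
    have : M default default = 1 := by simpa [Matrix.trace] using hM
    simp [Unique.eq_default i, Unique.eq_default j, this]
  have h2 : Real.log 2 ≠ 0 := by positivity
  apply mul_right_cancel₀ h2
  rw [h.entropy]; simp
end

/-! ### A variational quadratic form -/
section
variable {n m k : Type*} [Fintype n] [DecidableEq n] [Fintype m] [DecidableEq m]
  [Fintype k] [DecidableEq k]

/-- The concave quadratic form `2 Re Tr X* R - Tr σ X X* - t Tr R X* X`. Both trace terms pair `σ`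
or `R` with a product, so the form is compatible with partial traces. -/
noncomputable def quadForm (R σ : Matrix n n ℂ) (t : ℝ) (X : Matrix n n ℂ) : ℝ :=
  2 * (Xᴴ * R).trace.re - (σ * (X * Xᴴ)).trace.re - t * (R * (Xᴴ * X)).trace.re

lemma quadForm_eq {R σ U V : Matrix n n ℂ} {p q : n → ℝ} (hR : Diagonalizes R V p)
    (hσ : Diagonalizes σ U q) (t : ℝ) (X : Matrix n n ℂ) :
    quadForm R σ t X = ∑ i, ∑ j, (2 * (star ((Uᴴ * X * V) i j) * (Uᴴ * V) i j).re * p j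
      - (q i + t * p j) * Complex.normSq ((Uᴴ * X * V) i j)) := by
  set Y := Uᴴ * X * V with hY
  have hX : X = U * Y * Vᴴ := by
    rw [hY]
    calc X = (U * Uᴴ) * X * (V * Vᴴ) := by rw [hσ.right, hR.right, one_mul, mul_one]
      _ = _ := by simp only [mul_assoc]
  have e1 : (Xᴴ * R).trace = ∑ i, ∑ j, star (Y i j) * (Uᴴ * V) i j * p j := by
    have : (Xᴴ * R).trace = (Yᴴ * ((Uᴴ * V) * diagonal fun i => (p i : ℂ))).trace := by
      rw [hX, hR.eq]
      simp only [conjTranspose_mul, conjTranspose_conjTranspose]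
      rw [show V * (Yᴴ * Uᴴ) * (V * (diagonal fun i => (p i : ℂ)) * Vᴴ)
        = V * (Yᴴ * Uᴴ * V * (diagonal fun i => (p i : ℂ)) * Vᴴ) by simp only [mul_assoc],
        Matrix.trace_mul_comm, mul_assoc _ Vᴴ V, hR.left, mul_one]
      simp only [mul_assoc]
    rw [this, Matrix.trace, Finset.sum_comm]
    refine Finset.sum_congr rfl fun j _ => ?_
    rw [Matrix.diag_apply, Matrix.mul_apply]
    refine Finset.sum_congr rfl fun i _ => ?_
    rw [Matrix.mul_diagonal, conjTranspose_apply, mul_assoc]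
  have e2 : (σ * (X * Xᴴ)).trace = ∑ i, ∑ j, (q i : ℂ) * (Y i j * star (Y i j)) := by
    have : (σ * (X * Xᴴ)).trace = ((diagonal fun i => (q i : ℂ)) * (Y * Yᴴ)).trace := by
      rw [hX, hσ.eq]
      simp only [conjTranspose_mul, conjTranspose_conjTranspose]
      rw [show U * (diagonal fun i => (q i : ℂ)) * Uᴴ * (U * Y * Vᴴ * (V * (Yᴴ * Uᴴ)))
        = U * ((diagonal fun i => (q i : ℂ)) * (Uᴴ * U) * Y * (Vᴴ * V) * Yᴴ * Uᴴ) by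
          simp only [mul_assoc],
        Matrix.trace_mul_comm, mul_assoc _ Uᴴ U, hσ.left, hR.left]
      simp only [mul_assoc, mul_one]
    rw [this, Matrix.trace]
    refine Finset.sum_congr rfl fun i _ => ?_
    rw [Matrix.diag_apply, Matrix.diagonal_mul, Matrix.mul_apply, Finset.mul_sum]
    simp
  have e3 : (R * (Xᴴ * X)).trace = ∑ i, ∑ j, (p j : ℂ) * (Y i j * star (Y i j)) := by
    have : (R * (Xᴴ * X)).trace = ((diagonal fun i => (p i : ℂ)) * (Yᴴ * Y)).trace := by
      rw [hX, hR.eq]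
      simp only [conjTranspose_mul, conjTranspose_conjTranspose]
      rw [show V * (diagonal fun i => (p i : ℂ)) * Vᴴ * (V * (Yᴴ * Uᴴ) * (U * Y * Vᴴ))
        = V * ((diagonal fun i => (p i : ℂ)) * (Vᴴ * V) * Yᴴ * (Uᴴ * U) * Y * Vᴴ) by
          simp only [mul_assoc],
        Matrix.trace_mul_comm, mul_assoc _ Vᴴ V, hσ.left, hR.left]
      simp only [mul_assoc, mul_one]
    rw [this, Matrix.trace, Finset.sum_comm]
    refine Finset.sum_congr rfl fun i _ => ?_
    rw [Matrix.diag_apply, Matrix.diagonal_mul, Matrix.mul_apply, Finset.mul_sum]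
    refine Finset.sum_congr rfl fun j _ => ?_
    rw [conjTranspose_apply, mul_comm (star _)]
  rw [quadForm, e1, e2, e3]
  simp only [Complex.re_sum, Finset.mul_sum, ← Finset.sum_sub_distrib]
  refine Finset.sum_congr rfl fun i _ => Finset.sum_congr rfl fun j _ => ?_
  simp only [Complex.star_def, Complex.mul_conj, Complex.re_mul_ofReal,
    Complex.ofReal_re]
  ring

/-- Completing the square in one matrix entry; the convention `x / 0 = 0` covers `d = 0`. -/
lemma quad_term_eq {y w : ℂ} {p d : ℝ} (h : d = 0 → (p : ℂ) * w = 0) :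
    2 * (star y * w).re * p - d * Complex.normSq y
      = p ^ 2 * Complex.normSq w / d - Complex.normSq (d * y - p * w) / d := by
  by_cases hd : d = 0
  · subst hd
    have := h rfl
    rcases mul_eq_zero.1 this with h | h
    · have : p = 0 := by exact_mod_cast h
      simp [this]
    · simp [h]
  · field_simp
    simp only [Complex.normSq_apply, Complex.star_def]
    simp
    ring

/-- The maximum of `quadForm R σ t` in terms of spectral data: `R` and `σ` have spectra `p`, `q` and
eigenbases `V`, `U`. Terms with vanishing denominator count as `0`. -/
noncomputable def quadMax (U V : Matrix n n ℂ) (p q : n → ℝ) (t : ℝ) : ℝ :=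
  ∑ i, ∑ j, p j ^ 2 * Complex.normSq ((Uᴴ * V) i j) / (q i + t * p j)

lemma quadForm_le {R σ U V : Matrix n n ℂ} {p q : n → ℝ} (hR : Diagonalizes R V p)
    (hσ : Diagonalizes σ U q) (hp : ∀ i, 0 ≤ p i) (hq : ∀ i, 0 ≤ q i) {t : ℝ} (ht : 0 < t)
    (X : Matrix n n ℂ) : quadForm R σ t X ≤ quadMax U V p q t := by
  rw [quadForm_eq hR hσ, quadMax]
  refine Finset.sum_le_sum fun i _ => Finset.sum_le_sum fun j _ => ?_
  have hd : 0 ≤ q i + t * p j := by have := hp j; have := hq i; positivity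
  rw [quad_term_eq]
  · have := div_nonneg (Complex.normSq_nonneg (((q i + t * p j : ℝ) : ℂ) * (Uᴴ * X * V) i j
      - p j * (Uᴴ * V) i j)) hd
    linarith
  · intro h
    have : p j = 0 := by
      have h1 := hp j; have h2 := hq i
      have : 0 ≤ t * p j := by positivity
      have : t * p j = 0 := by linarith
      rcases mul_eq_zero.1 this with h | h
      · exact absurd h ht.ne'
      · exact h
    simp [this]

lemma quadForm_eq_quadMax {R σ U V : Matrix n n ℂ} {p q : n → ℝ} (hR : Diagonalizes R V p)
    (hσ : Diagonalizes σ U q) (t : ℝ) (h : ∀ i j, q i + t * p j = 0 → (p j : ℂ) * (Uᴴ * V) i j = 0)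
    (X : Matrix n n ℂ)
    (hX : ∀ i j, ((q i + t * p j : ℝ) : ℂ) * (Uᴴ * X * V) i j = p j * (Uᴴ * V) i j) :
    quadForm R σ t X = quadMax U V p q t := by
  rw [quadForm_eq hR hσ, quadMax]
  refine Finset.sum_congr rfl fun i _ => Finset.sum_congr rfl fun j _ => ?_
  rw [quad_term_eq (h i j), hX i j]
  simp

/-- At `t = 0`, a maximiser of the quadratic form satisfies the stationarity equation `σ X = R`. -/
lemma mul_eq_of_quadForm_eq {R σ U V : Matrix n n ℂ} {p q : n → ℝ} (hR : Diagonalizes R V p)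
    (hσ : Diagonalizes σ U q) (hq : ∀ i, 0 ≤ q i)
    (h : ∀ i j, q i = 0 → (p j : ℂ) * (Uᴴ * V) i j = 0) (X : Matrix n n ℂ)
    (hX : quadForm R σ 0 X = quadMax U V p q 0) : σ * X = R := by
  rw [quadForm_eq hR hσ, quadMax, ← sub_eq_zero, ← neg_eq_zero] at hX
  simp only [← Finset.sum_sub_distrib, ← Finset.sum_neg_distrib] at hX
  have e : ∀ i j, -(2 * (star ((Uᴴ * X * V) i j) * (Uᴴ * V) i j).re * p j
      - (q i + 0 * p j) * Complex.normSq ((Uᴴ * X * V) i j)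
      - p j ^ 2 * Complex.normSq ((Uᴴ * V) i j) / (q i + 0 * p j))
      = Complex.normSq (q i * (Uᴴ * X * V) i j - p j * (Uᴴ * V) i j) / q i := by
    intro i j
    rw [quad_term_eq (by simpa using h i j)]
    simp
  simp only [e] at hX
  have hnn : ∀ i j, 0 ≤ Complex.normSq (q i * (Uᴴ * X * V) i j - p j * (Uᴴ * V) i j) / q i :=
    fun i j => div_nonneg (Complex.normSq_nonneg _) (hq i)
  have hz : ∀ i j, (q i : ℂ) * (Uᴴ * X * V) i j = p j * (Uᴴ * V) i j := by
    intro i j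
    have h1 := (Finset.sum_eq_zero_iff_of_nonneg
      (fun i _ => Finset.sum_nonneg fun j _ => hnn i j)).1 hX i (Finset.mem_univ _)
    have h2 := (Finset.sum_eq_zero_iff_of_nonneg (fun j _ => hnn i j)).1 h1 j (Finset.mem_univ _)
    rcases div_eq_zero_iff.1 h2 with h3 | h3
    · exact sub_eq_zero.1 (Complex.normSq_eq_zero.1 h3)
    · rw [h i j h3, h3]; simp
  have hm : (diagonal fun i => (q i : ℂ)) * (Uᴴ * X * V)
      = (Uᴴ * V) * diagonal fun i => (p i : ℂ) := by
    ext i j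
    rw [Matrix.diagonal_mul, Matrix.mul_diagonal, hz i j, mul_comm]
  calc σ * X = U * ((diagonal fun i => (q i : ℂ)) * (Uᴴ * X * V)) * Vᴴ := by
        rw [hσ.eq]
        calc _ = U * (diagonal fun i => (q i : ℂ)) * Uᴴ * X * (V * Vᴴ) := by
              rw [hR.right, mul_one]
          _ = _ := by simp only [mul_assoc]
    _ = (U * Uᴴ) * (V * (diagonal fun i => (p i : ℂ)) * Vᴴ) := by
        rw [hm]; simp only [mul_assoc]
    _ = R := by rw [hσ.right, one_mul, ← hR.eq]

/-- Let `π` map `X` to a matrix on a larger space so that it carries the quadratic form of `(r, s)`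
to that of `(R, σ)`, as `X ↦ 1 ⊗ X` does when `r`, `s` are partial traces of `R`, `σ`. If the
relative entropies of `(R, σ)` and `(r, s)` are equal, which is `hlog` written in eigenbases, then
`R = σ π(s⁻¹ r)`, where `s⁻¹` is the pseudo-inverse. -/
lemma eq_mul_of_relEntropy_eq {R σ U V : Matrix n n ℂ} {p q : n → ℝ}
    {r s U' V' : Matrix m m ℂ} {p' q' : m → ℝ}
    (hR : Diagonalizes R V p) (hσ : Diagonalizes σ U q)
    (hr : Diagonalizes r V' p') (hs : Diagonalizes s U' q')
    (hp : ∀ i, 0 ≤ p i) (hq : ∀ i, 0 ≤ q i) (hp' : ∀ i, 0 ≤ p' i) (hq' : ∀ i, 0 ≤ q' i)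
    (hsupp : ∀ i j, q i = 0 → (p j : ℂ) * (Uᴴ * V) i j = 0)
    (hsupp' : ∀ i j, q' i = 0 → (p' j : ℂ) * (U'ᴴ * V') i j = 0)
    (hsum : ∑ i, ∑ j, Complex.normSq ((Uᴴ * V) i j) * p j
      = ∑ i, ∑ j, Complex.normSq ((U'ᴴ * V') i j) * p' j)
    (hlog : ∑ i, ∑ j, Complex.normSq ((Uᴴ * V) i j) * p j * Real.log (q i / p j)
      = ∑ i, ∑ j, Complex.normSq ((U'ᴴ * V') i j) * p' j * Real.log (q' i / p' j))
    (π : Matrix m m ℂ → Matrix n n ℂ)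
    (hπ : ∀ t X, quadForm R σ t (π X) = quadForm r s t X) :
    R = σ * π (U' * (diagonal fun i => ((q' i)⁻¹ : ℂ)) * U'ᴴ * r) := by
  have conv : ∀ (w p q t : ℝ), p ^ 2 * w / (q + t * p) = w * p / (q / p + t) := by
    intro w p q t
    by_cases h : p = 0
    · simp [h]
    · have : q / p + t = (q + t * p) / p := by field_simp
      rw [this, div_div_eq_mul_div]; ring
  have hxpos : ∀ {w : ℂ} {p q : ℝ}, 0 ≤ p → 0 ≤ q → (q = 0 → (p : ℂ) * w = 0) →
      Complex.normSq w * p ≠ 0 → 0 < q / p := by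
    intro w p q hp hq h hc
    have hp0 : p ≠ 0 := right_ne_zero_of_mul hc
    have hw : w ≠ 0 := fun hw => hc (by simp [hw])
    have hq0 : q ≠ 0 := fun hq0 => by
      rcases mul_eq_zero.1 (h hq0) with h | h
      · exact hp0 (by exact_mod_cast h)
      · exact hw h
    have := lt_of_le_of_ne hp hp0.symm
    have := lt_of_le_of_ne hq hq0.symm
    positivity
  have hle : ∀ t : ℝ, 0 < t → quadMax U' V' p' q' t ≤ quadMax U V p q t := by
    intro t ht
    have hd : ∀ i j, q' i + t * p' j = 0 → p' j = 0 := by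
      intro i j h
      have h1 := hp' j; have h2 := hq' i
      have : 0 ≤ t * p' j := by positivity
      have : t * p' j = 0 := by linarith
      exact (mul_eq_zero.1 this).resolve_left (ne_of_gt ht)
    -- The maximiser of the quadratic form, written in the two eigenbases.
    let Y : Matrix m m ℂ := of fun i j => p' j * (U'ᴴ * V') i j / ((q' i + t * p' j : ℝ) : ℂ)
    have hY : U'ᴴ * (U' * Y * V'ᴴ) * V' = Y := by
      calc _ = (U'ᴴ * U') * Y * (V'ᴴ * V') := by simp only [mul_assoc]
        _ = Y := by rw [hs.left, hr.left, one_mul, mul_one]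
    rw [← quadForm_eq_quadMax hr hs t (fun i j h => by simp [hd i j h]) (U' * Y * V'ᴴ), ← hπ]
    · exact quadForm_le hR hσ hp hq ht _
    · intro i j
      rw [hY]
      by_cases h : q' i + t * p' j = 0
      · rw [h, hd i j h]; simp
      · have : ((q' i + t * p' j : ℝ) : ℂ) ≠ 0 := by exact_mod_cast h
        simp only [Y, of_apply]
        field_simp
  -- The weights are `|⟨u_i, v_j⟩|² p_j` and the nodes are `q_i / p_j`.
  have hmax : quadMax U V p q 0 = quadMax U' V' p' q' 0 := by
    have := sum_div_eq_of_sum_log_eq (I := n × n) (J := m × m)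
      (fun a => Complex.normSq ((Uᴴ * V) a.1 a.2) * p a.2) (fun a => q a.1 / p a.2)
      (fun a => Complex.normSq ((U'ᴴ * V') a.1 a.2) * p' a.2) (fun a => q' a.1 / p' a.2)
      (fun a => hxpos (hp _) (hq _) (hsupp _ _)) (fun a => hxpos (hp' _) (hq' _) (hsupp' _ _))
      (by simpa only [Fintype.sum_prod_type] using hsum)
      (by simpa only [Fintype.sum_prod_type] using hlog)
      (fun t ht => by
        simpa only [Fintype.sum_prod_type, quadMax, conv] using hle t ht)
    simpa only [Fintype.sum_prod_type, quadMax, conv, add_zero] using this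
  symm
  apply mul_eq_of_quadForm_eq hR hσ hq hsupp
  rw [hπ, hmax]
  apply quadForm_eq_quadMax hr hs 0 (by simpa using hsupp')
  intro i j
  have : U'ᴴ * (U' * (diagonal fun i => ((q' i)⁻¹ : ℂ)) * U'ᴴ * r) * V'
      = (diagonal fun i => ((q' i)⁻¹ : ℂ)) * ((U'ᴴ * V') * diagonal fun i => (p' i : ℂ)) := by
    rw [hr.eq]
    calc _ = (U'ᴴ * U') * (diagonal fun i => ((q' i)⁻¹ : ℂ)) * (U'ᴴ * V') *
          (diagonal fun i => (p' i : ℂ)) * (V'ᴴ * V') := by simp only [mul_assoc]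
      _ = _ := by rw [hs.left, hr.left, one_mul, mul_one]; simp only [mul_assoc]
  rw [this, Matrix.diagonal_mul, Matrix.mul_diagonal]
  by_cases h : q' i = 0
  · rw [h, hsupp' i j h]; simp
  · have : (q' i : ℂ) ≠ 0 := by exact_mod_cast h
    simp only [zero_mul, add_zero]
    field_simp
end

/-! ### Equality in strong subadditivity -/
section
variable {m k : Type*} [Fintype m] [DecidableEq m] [Fintype k] [DecidableEq k]

/-- Partial trace over the second tensor factor. -/
def traceSnd (R : Matrix (m × k) (m × k) ℂ) : Matrix m m ℂ :=
  of fun i j => ∑ l, R (i, l) (j, l)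

lemma traceSnd_kronecker_one_mul (Z : Matrix m m ℂ) (R : Matrix (m × k) (m × k) ℂ) :
    traceSnd ((Z ⊗ₖ (1 : Matrix k k ℂ)) * R) = Z * traceSnd R := by
  ext i j
  simp only [traceSnd, of_apply, Matrix.mul_apply, Fintype.sum_prod_type, kroneckerMap_apply,
    Matrix.one_apply, mul_ite, mul_one, mul_zero, ite_mul, zero_mul, Finset.sum_ite_eq,
    Finset.mem_univ, if_true, Finset.mul_sum]
  exact Finset.sum_comm

lemma traceSnd_mul_kronecker_one (Z : Matrix m m ℂ) (R : Matrix (m × k) (m × k) ℂ) :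
    traceSnd (R * (Z ⊗ₖ (1 : Matrix k k ℂ))) = traceSnd R * Z := by
  ext i j
  simp only [traceSnd, of_apply, Matrix.mul_apply, Fintype.sum_prod_type, kroneckerMap_apply,
    Matrix.one_apply, mul_ite, mul_one, mul_zero, Finset.sum_ite_eq',
    Finset.mem_univ, if_true, Finset.sum_mul]
  exact Finset.sum_comm

lemma Diagonalizes.kronecker_one {M U : Matrix m m ℂ} {q : m → ℝ} (h : Diagonalizes M U q) :
    Diagonalizes (M ⊗ₖ (1 : Matrix k k ℂ)) (U ⊗ₖ (1 : Matrix k k ℂ)) (fun i => q i.1) := by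
  have h1 : Diagonalizes (1 : Matrix k k ℂ) 1 (fun _ => 1) := ⟨by simp, by simp, by simp⟩
  simpa using h.kronecker h1

variable {R V : Matrix (m × k) (m × k) ℂ} {U : Matrix m m ℂ} {p : m × k → ℝ} {q : m → ℝ}

/-- The spectrum of a marginal is the marginal of the distribution obtained by measuring `R` in an
eigenbasis of that marginal. -/
lemma sum_overlap_eq (hR : Diagonalizes R V p) (hr : Diagonalizes (traceSnd R) U q) (i : m) :
    ∑ l, ∑ j, Complex.normSq (((U ⊗ₖ (1 : Matrix k k ℂ))ᴴ * V) (i, l) j) * p j = q i := by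
  set U1 := U ⊗ₖ (1 : Matrix k k ℂ) with hU1
  have e1 : traceSnd (U1ᴴ * R * U1) = diagonal fun i => (q i : ℂ) := by
    rw [hU1, traceSnd_mul_kronecker_one, conjTranspose_kronecker, conjTranspose_one,
      traceSnd_kronecker_one_mul, hr.eq]
    calc _ = (Uᴴ * U) * (diagonal fun i => (q i : ℂ)) * (Uᴴ * U) := by simp only [mul_assoc]
      _ = _ := by rw [hr.left, one_mul, mul_one]
  have e2 : U1ᴴ * R * U1 = (U1ᴴ * V) * (diagonal fun i => (p i : ℂ)) * (U1ᴴ * V)ᴴ := by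
    rw [hR.eq, conjTranspose_mul, conjTranspose_conjTranspose]; simp only [mul_assoc]
  have e3 := congrFun (congrFun e1 i) i
  rw [e2, diagonal_apply_eq] at e3
  have e4 : ((∑ l, ∑ j, Complex.normSq ((U1ᴴ * V) (i, l) j) * p j : ℝ) : ℂ) = (q i : ℂ) := by
    rw [← e3, traceSnd, of_apply]
    push_cast
    refine Finset.sum_congr rfl fun l _ => ?_
    rw [Matrix.mul_apply]
    refine Finset.sum_congr rfl fun j _ => ?_
    rw [Matrix.mul_diagonal, conjTranspose_apply, Complex.normSq_eq_conj_mul_self, Complex.star_def]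
    ring
  exact_mod_cast e4

lemma sum_overlap_col {n : Type*} [Fintype n] [DecidableEq n] {U V : Matrix n n ℂ}
    (hU : U * Uᴴ = 1) (hV : Vᴴ * V = 1) (j : n) :
    ∑ i, Complex.normSq ((Uᴴ * V) i j) = 1 := by
  have e : (Uᴴ * V)ᴴ * (Uᴴ * V) = 1 := by
    rw [conjTranspose_mul, conjTranspose_conjTranspose]
    calc _ = Vᴴ * (U * Uᴴ) * V := by simp only [mul_assoc]
      _ = 1 := by rw [hU, mul_one, hV]
  have e3 := congrFun (congrFun e j) j
  rw [Matrix.mul_apply, Matrix.one_apply_eq] at e3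
  have : ((∑ i, Complex.normSq ((Uᴴ * V) i j) : ℝ) : ℂ) = 1 := by
    rw [← e3]; push_cast
    refine Finset.sum_congr rfl fun i _ => ?_
    rw [conjTranspose_apply, Complex.normSq_eq_conj_mul_self, Complex.star_def]
  exact_mod_cast this

/-- The support of `R` lies in that of its marginal tensored with the identity. -/
lemma overlap_support (hR : Diagonalizes R V p) (hr : Diagonalizes (traceSnd R) U q)
    (hp : ∀ i, 0 ≤ p i) (i : m × k) (j : m × k) (hq : q i.1 = 0) :
    (p j : ℂ) * ((U ⊗ₖ (1 : Matrix k k ℂ))ᴴ * V) i j = 0 := by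
  have h := sum_overlap_eq hR hr i.1
  rw [hq] at h
  have hnn : ∀ l j, 0 ≤ Complex.normSq (((U ⊗ₖ (1 : Matrix k k ℂ))ᴴ * V) (i.1, l) j) * p j :=
    fun l j => mul_nonneg (Complex.normSq_nonneg _) (hp j)
  have h1 := (Finset.sum_eq_zero_iff_of_nonneg
    (fun l _ => Finset.sum_nonneg fun j _ => hnn l j)).1 h i.2 (Finset.mem_univ _)
  have h2 := (Finset.sum_eq_zero_iff_of_nonneg (fun j _ => hnn i.2 j)).1 h1 j (Finset.mem_univ _)
  rcases mul_eq_zero.1 h2 with h3 | h3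
  · rw [Complex.normSq_eq_zero.1 h3, mul_zero]
  · simp [h3]

lemma marginal_spectrum_nonneg (hR : Diagonalizes R V p) (hr : Diagonalizes (traceSnd R) U q)
    (hp : ∀ i, 0 ≤ p i) (i : m) : 0 ≤ q i := by
  rw [← sum_overlap_eq hR hr i]
  exact Finset.sum_nonneg fun l _ => Finset.sum_nonneg fun j _ =>
    mul_nonneg (Complex.normSq_nonneg _) (hp j)

lemma sum_overlap (hR : Diagonalizes R V p) (hr : Diagonalizes (traceSnd R) U q) :
    ∑ i, ∑ j, Complex.normSq (((U ⊗ₖ (1 : Matrix k k ℂ))ᴴ * V) i j) * p j = R.trace.re := by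
  rw [Finset.sum_comm, hR.trace, Complex.ofReal_re]
  refine Finset.sum_congr rfl fun j _ => ?_
  rw [← Finset.sum_mul, sum_overlap_col hr.kronecker_one.right hR.left, one_mul]

/-- Minus the relative entropy of `R` with respect to `traceSnd R ⊗ 1`, in nats, is the conditional
entropy `S(R) - S(traceSnd R)`. -/
lemma sum_overlap_log (hR : Diagonalizes R V p) (hr : Diagonalizes (traceSnd R) U q)
    (hp : ∀ i, 0 ≤ p i) :
    ∑ i, ∑ j, Complex.normSq (((U ⊗ₖ (1 : Matrix k k ℂ))ᴴ * V) i j) * p j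
      * Real.log (q i.1 / p j) = (vNEntropy R - vNEntropy (traceSnd R)) * Real.log 2 := by
  rw [sub_mul, hR.entropy, hr.entropy]
  have e1 : ∑ i, Real.negMulLog (q i) = - ∑ i : m × k, ∑ j,
      Complex.normSq (((U ⊗ₖ (1 : Matrix k k ℂ))ᴴ * V) i j) * p j * Real.log (q i.1) := by
    rw [Fintype.sum_prod_type, ← Finset.sum_neg_distrib]
    refine Finset.sum_congr rfl fun i _ => ?_
    simp only [← Finset.sum_mul]
    rw [sum_overlap_eq hR hr, Real.negMulLog, neg_mul]
  have e2 : ∑ i, Real.negMulLog (p i) = - ∑ i : m × k, ∑ j,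
      Complex.normSq (((U ⊗ₖ (1 : Matrix k k ℂ))ᴴ * V) i j) * p j * Real.log (p j) := by
    rw [Finset.sum_comm, ← Finset.sum_neg_distrib]
    refine Finset.sum_congr rfl fun j _ => ?_
    rw [← Finset.sum_mul, ← Finset.sum_mul, sum_overlap_col hr.kronecker_one.right hR.left,
      Real.negMulLog, one_mul, neg_mul]
  rw [e1, e2, sub_neg_eq_add, neg_add_eq_sub, ← Finset.sum_sub_distrib]
  refine Finset.sum_congr rfl fun i _ => ?_
  rw [← Finset.sum_sub_distrib]
  refine Finset.sum_congr rfl fun j _ => ?_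
  by_cases hpj : p j = 0
  · simp [hpj]
  by_cases hqi : q i.1 = 0
  · have := overlap_support hR hr hp i j hqi
    rcases mul_eq_zero.1 this with h | h
    · exact absurd (by exact_mod_cast h) hpj
    · simp [h]
  · rw [Real.log_div hqi hpj]; ring
end

section SSA
variable {A B C : Type*} [Fintype A] [DecidableEq A] [Fintype B] [DecidableEq B]
  [Fintype C] [DecidableEq C]

/-- Partial trace over the system `A` of a matrix on `(A ⊗ B) ⊗ C`. -/
def traceFst (ρ : Matrix ((A × B) × C) ((A × B) × C) ℂ) : Matrix (B × C) (B × C) ℂ :=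
  of fun i j => ∑ a, ρ ((a, i.1), i.2) ((a, j.1), j.2)

/-- The operator `1 ⊗ X` on `(A ⊗ B) ⊗ C`, for `X` on `B ⊗ C`. -/
def embedSnd (X : Matrix (B × C) (B × C) ℂ) : Matrix ((A × B) × C) ((A × B) × C) ℂ :=
  ((1 : Matrix A A ℂ) ⊗ₖ X).submatrix (Equiv.prodAssoc A B C) (Equiv.prodAssoc A B C)

lemma embedSnd_mul (X Y : Matrix (B × C) (B × C) ℂ) :
    (embedSnd X : Matrix ((A × B) × C) _ ℂ) * embedSnd Y = embedSnd (X * Y) := by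
  rw [embedSnd, embedSnd, submatrix_mul_equiv, ← mul_kronecker_mul, one_mul, embedSnd]

lemma embedSnd_conjTranspose (X : Matrix (B × C) (B × C) ℂ) :
    (embedSnd X : Matrix ((A × B) × C) _ ℂ)ᴴ = embedSnd Xᴴ := by
  rw [embedSnd, conjTranspose_submatrix, conjTranspose_kronecker, conjTranspose_one, embedSnd]

lemma trace_mul_embedSnd (ρ : Matrix ((A × B) × C) ((A × B) × C) ℂ) (X : Matrix (B × C) (B × C) ℂ) :
    (ρ * embedSnd X).trace = (traceFst ρ * X).trace := by
  simp only [Matrix.trace, diag_apply, Matrix.mul_apply, embedSnd, submatrix_apply, traceFst,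
    of_apply, kroneckerMap_apply, Fintype.sum_prod_type, Equiv.prodAssoc_apply, Matrix.one_apply,
    ite_mul, one_mul, zero_mul, mul_ite, mul_zero, Finset.sum_mul]
  rw [Finset.sum_comm]
  refine Finset.sum_congr rfl fun b _ => ?_
  rw [Finset.sum_comm]
  refine Finset.sum_congr rfl fun c _ => ?_
  have : ∀ a : A, (∑ a', ∑ b', ∑ c', if a' = a then ρ ((a, b), c) ((a', b'), c') * X (b', c') (b, c)
      else 0) = ∑ b', ∑ c', ρ ((a, b), c) ((a, b'), c') * X (b', c') (b, c) := by
    intro a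
    rw [Finset.sum_eq_single a]
    · simp
    · intro a' _ h; simp [h]
    · simp
  simp only [this]
  rw [Finset.sum_comm]
  refine Finset.sum_congr rfl fun b' _ => ?_
  rw [Finset.sum_comm]

lemma quadForm_embedSnd (ρ σ : Matrix ((A × B) × C) ((A × B) × C) ℂ) (t : ℝ)
    (X : Matrix (B × C) (B × C) ℂ) :
    quadForm ρ σ t (embedSnd X) = quadForm (traceFst ρ) (traceFst σ) t X := by
  simp only [quadForm, embedSnd_conjTranspose, embedSnd_mul, trace_mul_embedSnd]
  rw [Matrix.trace_mul_comm, trace_mul_embedSnd, Matrix.trace_mul_comm]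

lemma traceFst_traceSnd_kronecker (ρ : Matrix ((A × B) × C) ((A × B) × C) ℂ) :
    traceFst ((traceSnd ρ) ⊗ₖ (1 : Matrix C C ℂ)) =
      traceSnd (traceFst ρ) ⊗ₖ (1 : Matrix C C ℂ) := by
  ext i j
  simp only [traceFst, traceSnd, of_apply, kroneckerMap_apply]
  rw [Finset.sum_comm, Finset.sum_mul]

lemma posSemidef_traceFst {ρ : Matrix ((A × B) × C) ((A × B) × C) ℂ} (h : ρ.PosSemidef) :
    (traceFst ρ).PosSemidef := by
  have : traceFst ρ = ∑ a : A, ρ.submatrix (fun i : B × C => ((a, i.1), i.2))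
      (fun i : B × C => ((a, i.1), i.2)) := by
    ext i j; simp [traceFst, Matrix.sum_apply]
  rw [this]
  exact posSemidef_sum _ fun a _ => h.submatrix _

lemma posSemidef_traceSnd {m k : Type*} [Fintype m] [DecidableEq m] [Fintype k] [DecidableEq k]
    {ρ : Matrix (m × k) (m × k) ℂ} (h : ρ.PosSemidef) : (traceSnd ρ).PosSemidef := by
  have : traceSnd ρ = ∑ a : k, ρ.submatrix (fun i => (i, a)) (fun i => (i, a)) := by
    ext i j; simp [traceSnd, Matrix.sum_apply]
  rw [this]
  exact posSemidef_sum _ fun a _ => h.submatrix _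

lemma trace_traceFst (ρ : Matrix ((A × B) × C) ((A × B) × C) ℂ) :
    (traceFst ρ).trace = ρ.trace := by
  have h := trace_mul_embedSnd ρ 1
  rwa [embedSnd, one_kronecker_one, submatrix_one_equiv, mul_one, mul_one, eq_comm] at h

/-- Equality in strong subadditivity, `I(A:C|B) = 0`, gives `ρ^{ABC} = ρ^{BC} E ρ^{AB}` with `E`
acting on `B` (the pseudo-inverse of `ρ^B`). -/
theorem markov_of_entropy_eq (ρ : Matrix ((A × B) × C) ((A × B) × C) ℂ) (hρ : ρ.PosSemidef)
    (hS : vNEntropy (traceSnd ρ) + vNEntropy (traceFst ρ)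
      = vNEntropy ρ + vNEntropy (traceSnd (traceFst ρ))) :
    ∃ E : Matrix B B ℂ, ∀ a b c a' b' c', ρ ((a, b), c) ((a', b'), c') =
      ∑ b₁, ∑ b₂, traceFst ρ (b, c) (b₁, c') * E b₁ b₂ * traceSnd ρ (a, b₂) (a', b') := by
  obtain ⟨V, p, hR, hp⟩ := hρ.exists_diagonalizes
  obtain ⟨U, q, hU, hq⟩ := (posSemidef_traceSnd hρ).exists_diagonalizes
  have hρ' := posSemidef_traceFst hρ
  obtain ⟨V', p', hR', hp'⟩ := hρ'.exists_diagonalizes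
  obtain ⟨U', q', hU', hq'⟩ := (posSemidef_traceSnd hρ').exists_diagonalizes
  have key := eq_mul_of_relEntropy_eq hR (hU.kronecker_one (k := C)) hR'
    (hU'.kronecker_one (k := C)) hp (fun i => hq i.1) hp' (fun i => hq' i.1)
    (overlap_support hR hU hp) (overlap_support hR' hU' hp')
    (by rw [sum_overlap hR hU, sum_overlap hR' hU', trace_traceFst])
    (by rw [sum_overlap_log hR hU hp, sum_overlap_log hR' hU' hp']; congr 1; linarith)
    embedSnd (fun t X => by rw [quadForm_embedSnd, traceFst_traceSnd_kronecker])
  set E : Matrix B B ℂ := U' * (diagonal fun i => ((q' i)⁻¹ : ℂ)) * U'ᴴ with hE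
  have hEk : (U' ⊗ₖ (1 : Matrix C C ℂ)) * (diagonal fun i : B × C => ((q' i.1)⁻¹ : ℂ)) *
      (U' ⊗ₖ (1 : Matrix C C ℂ))ᴴ = E ⊗ₖ (1 : Matrix C C ℂ) := by
    have : (diagonal fun i : B × C => ((q' i.1)⁻¹ : ℂ))
        = (diagonal fun i => ((q' i)⁻¹ : ℂ)) ⊗ₖ (1 : Matrix C C ℂ) := by
      rw [← diagonal_one, diagonal_kronecker_diagonal]; simp
    rw [this, conjTranspose_kronecker, ← mul_kronecker_mul, ← mul_kronecker_mul, hE]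
    simp
  have hEH : Eᴴ = E := by
    rw [hE]
    simp only [conjTranspose_mul, conjTranspose_conjTranspose, mul_assoc, diagonal_conjTranspose]
    congr 3
    ext i
    simp
  rw [hEk] at key
  -- The adjoint of `key`; all the factors are Hermitian.
  have key2 : ρ = embedSnd (traceFst ρ * (E ⊗ₖ (1 : Matrix C C ℂ))) *
      (traceSnd ρ ⊗ₖ (1 : Matrix C C ℂ)) := by
    have h := congrArg conjTranspose key
    rw [hρ.isHermitian.eq, conjTranspose_mul, embedSnd_conjTranspose, conjTranspose_mul,
      conjTranspose_kronecker, conjTranspose_kronecker, conjTranspose_one, hEH, hρ'.isHermitian.eq,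
      (posSemidef_traceSnd hρ).isHermitian.eq] at h
    exact h
  refine ⟨E, fun a b c a' b' c' => ?_⟩
  have := congrFun (congrFun key2 ((a, b), c)) ((a', b'), c')
  rw [this]
  simp only [Matrix.mul_apply, embedSnd, submatrix_apply, kroneckerMap_apply,
    Fintype.sum_prod_type, Equiv.prodAssoc_apply, Matrix.one_apply,
    ite_mul, one_mul, zero_mul, mul_ite, mul_one, mul_zero, Finset.sum_ite_eq',
    Finset.mem_univ, if_true, Finset.sum_mul]
  rw [Finset.sum_eq_single a]
  · simp only [if_true]
    rw [Finset.sum_comm]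
  · intro a'' _ h; simp [Ne.symm h]
  · simp
end SSA

/-! ### Lifting operator identities from marginals -/
section Lift
variable {n m k : Type*} [Fintype n] [DecidableEq n] [Fintype m] [DecidableEq m]
  [Fintype k] [DecidableEq k]

open scoped MatrixOrder in
lemma mul_eq_zero_of_trace {τ : Matrix n n ℂ} (hτ : τ.PosSemidef) {Z : Matrix n n ℂ}
    (h : (Z * τ * Zᴴ).trace = 0) : Z * τ = 0 := by
  have h0 := (hτ.mul_mul_conjTranspose_same Z).trace_eq_zero_iff.1 h
  obtain ⟨S, rfl⟩ := CStarAlgebra.nonneg_iff_eq_star_mul_self.mp hτ.nonneg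
  rw [star_eq_conjTranspose] at h0 ⊢
  have h1 : (S * Zᴴ)ᴴ * (S * Zᴴ) = 0 := by
    rw [← h0, conjTranspose_mul, conjTranspose_conjTranspose]; simp only [mul_assoc]
  have h2 := conjTranspose_mul_self_eq_zero.1 h1
  have h3 : Z * Sᴴ = 0 := by
    have := congrArg conjTranspose h2
    simpa using this
  rw [← mul_assoc, h3, zero_mul]

/-- If `Z` annihilates a marginal of `ρ`, then `Z ⊗ 1` annihilates `ρ`, because
`Tr (Z ⊗ 1) ρ (Z ⊗ 1)*` depends only on the marginal. -/
lemma lift_mul_eq_zero {ρ : Matrix n n ℂ} (hρ : ρ.PosSemidef) (f : m × k ≃ n) {Z : Matrix m m ℂ}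
    (h : Z * traceSnd (ρ.submatrix f f) = 0) (i : m) (l : k) (j : n) :
    ∑ i', Z i i' * ρ (f (i', l)) j = 0 := by
  have hz : (Z ⊗ₖ (1 : Matrix k k ℂ)) * ρ.submatrix f f = 0 := by
    apply mul_eq_zero_of_trace (hρ.submatrix f)
    have e : ∀ T : Matrix (m × k) (m × k) ℂ, T.trace = (traceSnd T).trace := fun T => by
      simp only [Matrix.trace, diag_apply, traceSnd, of_apply, Fintype.sum_prod_type]
    rw [e, conjTranspose_kronecker, conjTranspose_one, traceSnd_mul_kronecker_one,
      traceSnd_kronecker_one_mul, h, zero_mul, Matrix.trace_zero]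
  have := congrFun (congrFun hz (i, l)) (f.symm j)
  simpa [Matrix.mul_apply, Fintype.sum_prod_type, Matrix.one_apply] using this

/-- The action of `1 ⊗ x - y ⊗ 1` in coordinates. -/
lemma sum_local_diff (x : Matrix k k ℂ) (y : Matrix m m ℂ) (g : m × k → ℂ) (i : m) (l : k) :
    ∑ s, ((1 : Matrix m m ℂ) ⊗ₖ x - y ⊗ₖ (1 : Matrix k k ℂ)) (i, l) s * g s
      = ∑ l', x l l' * g (i, l') - ∑ i', y i i' * g (i', l) := by
  simp only [Matrix.sub_apply, sub_mul, Finset.sum_sub_distrib, kroneckerMap_apply,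
    Fintype.sum_prod_type, Matrix.one_apply, ite_mul, mul_ite, one_mul, zero_mul, mul_one, mul_zero,
    Finset.sum_ite_eq, Finset.mem_univ, if_true]
  congr 1
  rw [Finset.sum_comm]
  simp

lemma posSemidef_marginal {ρ : Matrix n n ℂ} (hρ : ρ.PosSemidef) (f : m → k → n) :
    (Matrix.of fun i j => ∑ l, ρ (f i l) (f j l)).PosSemidef := by
  have : (Matrix.of fun i j => ∑ l, ρ (f i l) (f j l))
      = ∑ l : k, ρ.submatrix (fun i => f i l) (fun i => f i l) := by
    ext i j; simp [Matrix.sum_apply]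
  rw [this]
  exact posSemidef_sum _ fun a _ => hρ.submatrix _
end Lift

/-! ### Marginals of a four-party matrix and their factorisations -/

section Marginals
variable {A B C D : Type*} [Fintype A] [DecidableEq A] [Fintype B] [DecidableEq B]
  [Fintype C] [DecidableEq C] [Fintype D] [DecidableEq D]
  (ρ : Matrix (A × B × C × D) (A × B × C × D) ℂ)

/-- The marginal of `ρ` on `A`, indexed as in `SA`. -/
def marA : Matrix A A ℂ := of fun a a₂ => ∑ b, ∑ c, ∑ d, ρ (a, b, c, d) (a₂, b, c, d)

/-- The marginal of `ρ` on `B`, indexed as in `SB`. -/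
def marB : Matrix B B ℂ := of fun b b₂ => ∑ a, ∑ c, ∑ d, ρ (a, b, c, d) (a, b₂, c, d)

/-- The marginal of `ρ` on `C`, indexed as in `SC`. -/
def marC : Matrix C C ℂ := of fun c c₂ => ∑ a, ∑ b, ∑ d, ρ (a, b, c, d) (a, b, c₂, d)

/-- The marginal of `ρ` on `D`, indexed as in `SD`. -/
def marD : Matrix D D ℂ := of fun d d₂ => ∑ a, ∑ b, ∑ c, ρ (a, b, c, d) (a, b, c, d₂)

/-- The marginal of `ρ` on `AB`, indexed as in `SAB`. -/
def marAB : Matrix (A × B) (A × B) ℂ :=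
  of fun p q => ∑ c, ∑ d, ρ (p.1, p.2, c, d) (q.1, q.2, c, d)

/-- The marginal of `ρ` on `AC`, indexed as in `SAC`. -/
def marAC : Matrix (A × C) (A × C) ℂ :=
  of fun p q => ∑ b, ∑ d, ρ (p.1, b, p.2, d) (q.1, b, q.2, d)

/-- The marginal of `ρ` on `AD`, indexed as in `SAD`. -/
def marAD : Matrix (A × D) (A × D) ℂ :=
  of fun p q => ∑ b, ∑ c, ρ (p.1, b, c, p.2) (q.1, b, c, q.2)

/-- The marginal of `ρ` on `BC`, indexed as in `SBC`. -/
def marBC : Matrix (B × C) (B × C) ℂ :=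
  of fun p q => ∑ a, ∑ d, ρ (a, p.1, p.2, d) (a, q.1, q.2, d)

/-- The marginal of `ρ` on `BD`, indexed as in `SBD`. -/
def marBD : Matrix (B × D) (B × D) ℂ :=
  of fun p q => ∑ a, ∑ c, ρ (a, p.1, c, p.2) (a, q.1, c, q.2)

/-- The marginal of `ρ` on `CD`, indexed as in `SCD`. -/
def marCD : Matrix (C × D) (C × D) ℂ :=
  of fun p q => ∑ a, ∑ b, ρ (a, b, p.1, p.2) (a, b, q.1, q.2)

/-- The marginal of `ρ` on `ABC`, indexed as in `SABC`. -/
def marABC : Matrix (A × B × C) (A × B × C) ℂ :=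
  of fun p q => ∑ d, ρ (p.1, p.2.1, p.2.2, d) (q.1, q.2.1, q.2.2, d)

/-- The marginal of `ρ` on `ABD`, indexed as in `SABD`. -/
def marABD : Matrix (A × B × D) (A × B × D) ℂ :=
  of fun p q => ∑ c, ρ (p.1, p.2.1, c, p.2.2) (q.1, q.2.1, c, q.2.2)

variable {ρ}

lemma marAB_posSemidef (hρ : ρ.PosSemidef) : (marAB ρ).PosSemidef := by
  have := posSemidef_marginal hρ (fun (p : A × B) (l : C × D) => (p.1, p.2, l.1, l.2))
  simp only [Fintype.sum_prod_type] at this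
  exact this

lemma marBD_posSemidef (hρ : ρ.PosSemidef) : (marBD ρ).PosSemidef := by
  have := posSemidef_marginal hρ (fun (p : B × D) (l : A × C) => (l.1, p.1, l.2, p.2))
  simp only [Fintype.sum_prod_type] at this
  exact this

lemma marCD_posSemidef (hρ : ρ.PosSemidef) : (marCD ρ).PosSemidef := by
  have := posSemidef_marginal hρ (fun (p : C × D) (l : A × B) => (l.1, l.2, p.1, p.2))
  simp only [Fintype.sum_prod_type] at this
  exact this

lemma marC_posSemidef (hρ : ρ.PosSemidef) : (marC ρ).PosSemidef := by
  have := posSemidef_marginal hρ (fun (p : C) (l : A × B × D) => (l.1, l.2.1, p, l.2.2))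
  simp only [Fintype.sum_prod_type] at this
  exact this

lemma marABC_posSemidef (hρ : ρ.PosSemidef) : (marABC ρ).PosSemidef :=
  posSemidef_marginal hρ (fun (p : A × B × C) (l : D) => (p.1, p.2.1, p.2.2, l))

lemma marABD_posSemidef (hρ : ρ.PosSemidef) : (marABD ρ).PosSemidef :=
  posSemidef_marginal hρ (fun (p : A × B × D) (l : C) => (p.1, p.2.1, l, p.2.2))

lemma trace_marAB : (marAB ρ).trace = ρ.trace := by
  simp only [Matrix.trace, diag_apply, marAB, of_apply, Fintype.sum_prod_type]

lemma trace_marC : (marC ρ).trace = ρ.trace := by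
  simp only [Matrix.trace, diag_apply, marC, of_apply, Fintype.sum_prod_type]
  rw [Finset.sum_comm]
  refine Finset.sum_congr rfl fun a _ => ?_
  rw [Finset.sum_comm]

lemma trace_marD : (marD ρ).trace = ρ.trace := by
  simp only [Matrix.trace, diag_apply, marD, of_apply, Fintype.sum_prod_type]
  rw [Finset.sum_comm]
  refine Finset.sum_congr rfl fun a _ => ?_
  rw [Finset.sum_comm]
  refine Finset.sum_congr rfl fun b _ => ?_
  rw [Finset.sum_comm]

lemma trace_marCD : (marCD ρ).trace = ρ.trace := by
  simp only [Matrix.trace, diag_apply, marCD, of_apply]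
  rw [Finset.sum_comm]
  simp only [Fintype.sum_prod_type]
  refine Finset.sum_congr rfl fun a _ => ?_
  calc _ = ∑ x : C × D, ∑ b, ρ (a, b, x.1, x.2) (a, b, x.1, x.2) := by
        rw [Fintype.sum_prod_type]
    _ = _ := by rw [Finset.sum_comm]; simp only [Fintype.sum_prod_type]

/-- If `I(A:C|B) = 0`, each block of `ρ^{ABC}` in the `C` indices is `x ρ^{AB}` with `x` on `B`. -/
lemma exists_actB (hρ : ρ.PosSemidef) (h : SAB ρ + SBC ρ = SABC ρ + SB ρ) :
    ∃ x : C → C → Matrix B B ℂ, ∀ a b c a' b' c', marABC ρ (a, b, c) (a', b', c')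
      = ∑ b₂, x c c' b b₂ * marAB ρ (a, b₂) (a', b') := by
  set τ := (marABC ρ).submatrix (Equiv.prodAssoc A B C) (Equiv.prodAssoc A B C) with hτ
  have h1 : traceSnd τ = marAB ρ := rfl
  have h2 : traceFst τ = marBC ρ := rfl
  have h3 : traceSnd (traceFst τ) = marB ρ := by
    ext b b'
    exact Finset.sum_comm
  obtain ⟨E, hE⟩ := markov_of_entropy_eq τ ((marABC_posSemidef hρ).submatrix _) (by
    rw [h3, h2, h1, hτ, vNEntropy_submatrix (marABC_posSemidef hρ).isHermitian]
    exact h)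
  refine ⟨fun c c' => of fun b b₂ => ∑ b₁, marBC ρ (b, c) (b₁, c') * E b₁ b₂,
    fun a b c a' b' c' => (hE a b c a' b' c').trans ?_⟩
  simp only [h1, h2, of_apply, Finset.sum_mul]
  exact Finset.sum_comm

/-- If `I(B:C|A) = 0`, each block of `ρ^{ABC}` in the `C` indices is `y ρ^{AB}` with `y` on `A`. -/
lemma exists_actA (hρ : ρ.PosSemidef) (h : SAB ρ + SAC ρ = SABC ρ + SA ρ) :
    ∃ y : C → C → Matrix A A ℂ, ∀ a b c a' b' c', marABC ρ (a, b, c) (a', b', c')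
      = ∑ a₂, y c c' a a₂ * marAB ρ (a₂, b) (a', b') := by
  let e : (B × A) × C ≃ A × B × C :=
    ((Equiv.prodComm B A).prodCongr (Equiv.refl C)).trans (Equiv.prodAssoc A B C)
  set τ := (marABC ρ).submatrix e e with hτ
  have h1 : traceSnd τ = (marAB ρ).submatrix (Equiv.prodComm B A) (Equiv.prodComm B A) := rfl
  have h2 : traceFst τ = marAC ρ := rfl
  have h3 : traceSnd (traceFst τ) = marA ρ := by
    ext b b'
    exact Finset.sum_comm
  obtain ⟨E, hE⟩ := markov_of_entropy_eq τ ((marABC_posSemidef hρ).submatrix _) (by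
    rw [h3, h2, h1, hτ, vNEntropy_submatrix (marABC_posSemidef hρ).isHermitian,
      vNEntropy_submatrix (marAB_posSemidef hρ).isHermitian]
    exact h)
  refine ⟨fun c c' => of fun a a₂ => ∑ a₁, marAC ρ (a, c) (a₁, c') * E a₁ a₂,
    fun a b c a' b' c' => (hE b a c b' a' c').trans ?_⟩
  simp only [h1, h2, of_apply, Finset.sum_mul]
  exact Finset.sum_comm

/-- If `I(A:B|D) = 0`, each block of `ρ^{ABD}` in the `B` indices is `z ρ^{AD}` with `z` on `D`. -/
lemma exists_actD (hρ : ρ.PosSemidef) (h : SAD ρ + SBD ρ = SABD ρ + SD ρ) :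
    ∃ z : B → B → Matrix D D ℂ, ∀ a b d a' b' d', marABD ρ (a, b, d) (a', b', d')
      = ∑ d₂, z b b' d d₂ * marAD ρ (a, d₂) (a', d') := by
  let e : (A × D) × B ≃ A × B × D :=
    (Equiv.prodAssoc A D B).trans ((Equiv.refl A).prodCongr (Equiv.prodComm D B))
  set τ := (marABD ρ).submatrix e e with hτ
  have h1 : traceSnd τ = marAD ρ := rfl
  have h2 : traceFst τ = (marBD ρ).submatrix (Equiv.prodComm D B) (Equiv.prodComm D B) := rfl
  have h3 : traceSnd (traceFst τ) = marD ρ := by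
    ext b b'
    exact Finset.sum_comm
  obtain ⟨E, hE⟩ := markov_of_entropy_eq τ ((marABD_posSemidef hρ).submatrix _) (by
    rw [h3, h2, h1, hτ, vNEntropy_submatrix (marABD_posSemidef hρ).isHermitian,
      vNEntropy_submatrix (marBD_posSemidef hρ).isHermitian]
    exact h)
  refine ⟨fun b b' => of fun d d₂ => ∑ d₁, marBD ρ (b, d) (b', d₁) * E d₁ d₂,
    fun a b d a' b' d' => (hE a d b a' d' b').trans ?_⟩
  simp only [h1, h2, of_apply, Finset.sum_mul]
  exact Finset.sum_comm

/-- If `I(C:D) = 0` then `ρ^{CD} = ρ^C ⊗ ρ^D`. This is the Markov factorisation with a trivial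
conditioning system `Unit`; the scalar `E` is `1` by taking traces. -/
lemma marCD_eq (hρ : ρ.PosSemidef) (ht : ρ.trace = 1) (h : SC ρ + SD ρ = SCD ρ) (c c' : C)
    (d d' : D) : marCD ρ (c, d) (c', d') = marC ρ c c' * marD ρ d d' := by
  let e : (C × Unit) × D ≃ C × D := (Equiv.prodPUnit C).prodCongr (Equiv.refl D)
  set τ := (marCD ρ).submatrix e e with hτ
  have h1 : traceSnd τ = (marC ρ).submatrix (Equiv.prodPUnit C) (Equiv.prodPUnit C) := by
    ext p q
    change ∑ d, ∑ a, ∑ b, ρ (a, b, p.1, d) (a, b, q.1, d)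
      = ∑ a, ∑ b, ∑ d, ρ (a, b, p.1, d) (a, b, q.1, d)
    rw [Finset.sum_comm]
    exact Finset.sum_congr rfl fun a _ => Finset.sum_comm
  have h2 : traceFst τ = (marD ρ).submatrix (Equiv.punitProd D) (Equiv.punitProd D) := by
    ext p q
    change ∑ c, ∑ a, ∑ b, ρ (a, b, c, p.2) (a, b, c, q.2)
      = ∑ a, ∑ b, ∑ c, ρ (a, b, c, p.2) (a, b, c, q.2)
    rw [Finset.sum_comm]
    exact Finset.sum_congr rfl fun a _ => Finset.sum_comm
  have hD : (marD ρ).PosSemidef := by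
    have := posSemidef_marginal hρ (fun (p : D) (l : A × B × C) => (l.1, l.2.1, l.2.2, p))
    simp only [Fintype.sum_prod_type] at this
    exact this
  have h3 : (traceSnd (traceFst τ)).trace = 1 := by
    rw [h2, ← ht, ← trace_marD]
    simp [Matrix.trace, traceSnd]
  obtain ⟨E, hE⟩ := markov_of_entropy_eq τ ((marCD_posSemidef hρ).submatrix _) (by
    rw [vNEntropy_of_unique h3, h2, h1, hτ,
      vNEntropy_submatrix (marCD_posSemidef hρ).isHermitian,
      vNEntropy_submatrix (marC_posSemidef hρ).isHermitian,
      vNEntropy_submatrix hD.isHermitian, add_zero]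
    exact h)
  have h4 : ∀ c c' d d', marCD ρ (c, d) (c', d')
      = E () () * (marC ρ c c' * marD ρ d d') := by
    intro c c' d d'
    have := hE c () d c' () d'
    rw [h1, h2] at this
    simp only [Finset.univ_unique, Finset.sum_singleton] at this
    refine this.trans ?_
    change marD ρ d d' * E () () * marC ρ c c' = _
    ring
  have h5 : E () () = 1 := by
    have h6 : (marCD ρ).trace = E () () * ((marC ρ).trace * (marD ρ).trace) := by
      simp only [Matrix.trace, diag_apply]
      rw [Fintype.sum_prod_type]
      simp only [h4]
      rw [Finset.sum_mul_sum, Finset.mul_sum]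
      exact Finset.sum_congr rfl fun c _ => (Finset.mul_sum _ _ _).symm
    rw [trace_marCD, trace_marC, trace_marD, ht] at h6
    simpa using h6.symm
  rw [h4, h5, one_mul]
end Marginals

/-! ### Factorisation of the marginal on ABC -/
section Intertwining

lemma sum_rotate3 {α β γ : Type*} [Fintype α] [Fintype β] [Fintype γ] (f : α → β → γ → ℂ) :
    ∑ a, ∑ b, ∑ c, f a b c = ∑ c, ∑ a, ∑ b, f a b c :=
  (Finset.sum_congr rfl fun _ _ => Finset.sum_comm).trans Finset.sum_comm

lemma sum_rotate4 {α β γ δ : Type*} [Fintype α] [Fintype β] [Fintype γ] [Fintype δ]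
    (f : α → β → γ → δ → ℂ) :
    ∑ a, ∑ b, ∑ c, ∑ d, f a b c d = ∑ d, ∑ a, ∑ b, ∑ c, f a b c d :=
  (Finset.sum_congr rfl fun _ _ => sum_rotate3 _).trans Finset.sum_comm

variable {A B C D : Type*} [Fintype A] [DecidableEq A] [Fintype B] [DecidableEq B]
  [Fintype C] [DecidableEq C] [Fintype D] [DecidableEq D]
  {ρ : Matrix (A × B × C × D) (A × B × C × D) ℂ}

/-- If `x` on `B` and `y` on `A` agree on `ρ^{AB}`, they agree on `ρ`. -/
lemma intertwine_AB (hρ : ρ.PosSemidef) {x : Matrix B B ℂ} {y : Matrix A A ℂ}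
    (h : ∀ a b a' b', ∑ b₂, x b b₂ * marAB ρ (a, b₂) (a', b')
      = ∑ a₂, y a a₂ * marAB ρ (a₂, b) (a', b')) (a : A) (b : B) (c : C) (d : D)
    (n : A × B × C × D) :
    ∑ b₂, x b b₂ * ρ (a, b₂, c, d) n = ∑ a₂, y a a₂ * ρ (a₂, b, c, d) n := by
  let f : (A × B) × (C × D) ≃ A × B × C × D := Equiv.prodAssoc A B (C × D)
  have h1 : traceSnd (ρ.submatrix f f) = marAB ρ := by
    ext p q
    exact Fintype.sum_prod_type _
  have h2 : ((1 : Matrix A A ℂ) ⊗ₖ x - y ⊗ₖ (1 : Matrix B B ℂ)) *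
      traceSnd (ρ.submatrix f f) = 0 := by
    ext ⟨i, l⟩ ⟨a', b'⟩
    rw [h1, Matrix.mul_apply, sum_local_diff x y (fun s => marAB ρ s (a', b')), h, sub_self]
    rfl
  have h3 := lift_mul_eq_zero hρ f h2 (a, b) (c, d) n
  rw [sum_local_diff x y (fun s => ρ (f (s, (c, d))) n)] at h3
  exact sub_eq_zero.1 h3

/-- If `e` on `D` and `y` on `A` agree on `ρ^{AD}`, they agree on `ρ`. -/
lemma intertwine_AD (hρ : ρ.PosSemidef) {e : Matrix D D ℂ} {y : Matrix A A ℂ}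
    (h : ∀ a d a' d', ∑ d₂, e d d₂ * marAD ρ (a, d₂) (a', d')
      = ∑ a₂, y a a₂ * marAD ρ (a₂, d) (a', d')) (a : A) (b : B) (c : C) (d : D)
    (n : A × B × C × D) :
    ∑ d₂, e d d₂ * ρ (a, b, c, d₂) n = ∑ a₂, y a a₂ * ρ (a₂, b, c, d) n := by
  let f : (A × D) × (B × C) ≃ A × B × C × D :=
    { toFun := fun p => (p.1.1, p.2.1, p.2.2, p.1.2)
      invFun := fun q => ((q.1, q.2.2.2), (q.2.1, q.2.2.1))
      left_inv := fun _ => rfl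
      right_inv := fun _ => rfl }
  have h1 : traceSnd (ρ.submatrix f f) = marAD ρ := by
    ext p q
    exact Fintype.sum_prod_type _
  have h2 : ((1 : Matrix A A ℂ) ⊗ₖ e - y ⊗ₖ (1 : Matrix D D ℂ)) *
      traceSnd (ρ.submatrix f f) = 0 := by
    ext ⟨i, l⟩ ⟨a', b'⟩
    rw [h1, Matrix.mul_apply, sum_local_diff e y (fun s => marAD ρ s (a', b')), h, sub_self]
    rfl
  have h3 := lift_mul_eq_zero hρ f h2 (a, d) (b, c) n
  rw [sum_local_diff e y (fun s => ρ (f (s, (b, c))) n)] at h3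
  exact sub_eq_zero.1 h3

/-- If `x ρ = y ρ` with `x` on `B` and `y` on `A`, and `ρ^{ABD}` factors as for `I(A:B|D) = 0`, then
also `e ρ = y ρ` for some `e` on `D`, namely `e = ∑ x(b, b₂) z(b₂, b)`. -/
lemma exists_actD_eq_actA (hρ : ρ.PosSemidef) {x : Matrix B B ℂ} {y : Matrix A A ℂ}
    (hxy : ∀ a b c d n,
      ∑ b₂, x b b₂ * ρ (a, b₂, c, d) n = ∑ a₂, y a a₂ * ρ (a₂, b, c, d) n)
    {z : B → B → Matrix D D ℂ} (hz : ∀ a b d a' b' d', marABD ρ (a, b, d) (a', b', d')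
      = ∑ d₂, z b b' d d₂ * marAD ρ (a, d₂) (a', d')) :
    ∃ e : Matrix D D ℂ, ∀ a b c d n,
      ∑ d₂, e d d₂ * ρ (a, b, c, d₂) n = ∑ a₂, y a a₂ * ρ (a₂, b, c, d) n := by
  refine ⟨of fun d d₂ => ∑ b, ∑ b₂, x b b₂ * z b₂ b d d₂, intertwine_AD hρ ?_⟩
  intro a d a' d'
  symm
  calc ∑ a₂, y a a₂ * marAD ρ (a₂, d) (a', d')
      = ∑ b, ∑ c, ∑ a₂, y a a₂ * ρ (a₂, b, c, d) (a', b, c, d') := by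
        simp only [marAD, of_apply, Finset.mul_sum]
        rw [Finset.sum_comm]
        exact Finset.sum_congr rfl fun b _ => Finset.sum_comm
    _ = ∑ b, ∑ c, ∑ b₂, x b b₂ * ρ (a, b₂, c, d) (a', b, c, d') := by simp only [hxy]
    _ = ∑ b, ∑ b₂, x b b₂ * marABD ρ (a, b₂, d) (a', b, d') := by
        simp only [marABD, of_apply, Finset.mul_sum]
        exact Finset.sum_congr rfl fun b _ => Finset.sum_comm
    _ = ∑ b, ∑ b₂, ∑ d₂, x b b₂ * (z b₂ b d d₂ * marAD ρ (a, d₂) (a', d')) := by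
        simp only [hz, Finset.mul_sum]
    _ = _ := by
        simp only [of_apply, Finset.sum_mul, mul_assoc]
        exact sum_rotate3 _

/-- If a block of `ρ^{ABC}` is `y ρ^{AB}` with `y` on `A`, if `y ρ = e ρ` for some `e` on `D`, and if
the corresponding block of `ρ^{CD}` is a multiple `μ` of `ρ^D`, then `y ρ^{AB} = μ ρ^{AB}`: the
variance `Tr (y - μ) ρ^{AB} (y - μ)*` vanishes. -/
lemma marABC_block_eq (hρ : ρ.PosSemidef) (ht : ρ.trace = 1) {c₀ c₀' : C}
    (hCD : ∀ d d', marCD ρ (c₀, d) (c₀', d') = marC ρ c₀ c₀' * marD ρ d d')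
    {y : Matrix A A ℂ} (hy : ∀ a b a' b', marABC ρ (a, b, c₀) (a', b', c₀')
      = ∑ a₂, y a a₂ * marAB ρ (a₂, b) (a', b'))
    {e : Matrix D D ℂ} (he : ∀ a b c d n,
      ∑ d₂, e d d₂ * ρ (a, b, c, d₂) n = ∑ a₂, y a a₂ * ρ (a₂, b, c, d) n)
    (p q : A × B) :
    marABC ρ (p.1, p.2, c₀) (q.1, q.2, c₀') = marC ρ c₀ c₀' * marAB ρ p q := by
  set μ := marC ρ c₀ c₀' with hμ
  set R := marAB ρ with hR
  have hRp : R.PosSemidef := marAB_posSemidef hρ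
  have hRt : R.trace = 1 := by rw [hR, trace_marAB, ht]
  -- The adjoint of `he`, as `ρ` is Hermitian.
  have he' : ∀ n a b c d, ∑ a₂, star (y a a₂) * ρ n (a₂, b, c, d)
      = ∑ d₂, star (e d d₂) * ρ n (a, b, c, d₂) := by
    intro n a b c d
    have := congrArg star (he a b c d n)
    simpa only [star_sum, star_mul', hρ.isHermitian.apply] using this.symm
  set Y : Matrix (A × B) (A × B) ℂ := y ⊗ₖ (1 : Matrix B B ℂ) with hY
  have hYR : ∀ p q : A × B, (Y * R) p q = marABC ρ (p.1, p.2, c₀) (q.1, q.2, c₀') := by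
    rintro ⟨a, b⟩ ⟨a', b'⟩
    rw [hy, Matrix.mul_apply, Fintype.sum_prod_type]
    simp [hY, Matrix.one_apply]
  have hYstar : ∀ (M : Matrix (A × B) (A × B) ℂ) (a : A) (b : B),
      (M * Yᴴ) (a, b) (a, b) = ∑ a₂, M (a, b) (a₂, b) * star (y a a₂) := by
    intro M a b
    rw [Matrix.mul_apply, Fintype.sum_prod_type]
    simp [hY, Matrix.one_apply, apply_ite]
  have hμ1 : (Y * R).trace = μ := by
    simp only [Matrix.trace, diag_apply, hYR, hμ, marC, marABC, of_apply, Fintype.sum_prod_type]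
  have hμ2 : (R * Yᴴ).trace = star μ := by
    rw [← hμ1, ← trace_conjTranspose, conjTranspose_mul, hRp.isHermitian.eq]
  have hν : ∑ d, ∑ d₂, star (e d d₂) * marD ρ d d₂ = star μ := by
    calc ∑ d, ∑ d₂, star (e d d₂) * marD ρ d d₂
        = ∑ a, ∑ b, ∑ c, ∑ d, ∑ d₂, star (e d d₂) * ρ (a, b, c, d) (a, b, c, d₂) := by
          simp only [marD, of_apply, Finset.mul_sum]
          symm
          rw [sum_rotate4]
          exact Finset.sum_congr rfl fun d _ => sum_rotate4 _
      _ = ∑ a, ∑ b, ∑ c, ∑ d, ∑ a₂, star (y a a₂) * ρ (a, b, c, d) (a₂, b, c, d) := by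
          simp only [he']
      _ = (R * Yᴴ).trace := by
          simp only [Matrix.trace, diag_apply, Fintype.sum_prod_type]
          refine Finset.sum_congr rfl fun a _ => Finset.sum_congr rfl fun b _ => ?_
          rw [hYstar R a b, sum_rotate3]
          simp only [hR, marAB, of_apply, mul_comm _ (star _), Finset.mul_sum]
      _ = star μ := hμ2
  have hT : (Y * R * Yᴴ).trace = μ * star μ := by
    calc (Y * R * Yᴴ).trace
        = ∑ a, ∑ b, ∑ a₂, marABC ρ (a, b, c₀) (a₂, b, c₀') * star (y a a₂) := by
          simp only [Matrix.trace, diag_apply, Fintype.sum_prod_type]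
          refine Finset.sum_congr rfl fun a _ => Finset.sum_congr rfl fun b _ => ?_
          rw [hYstar]
          simp only [hYR]
      _ = ∑ a, ∑ b, ∑ d, ∑ a₂, star (y a a₂) * ρ (a, b, c₀, d) (a₂, b, c₀', d) := by
          simp only [marABC, of_apply, Finset.sum_mul]
          refine Finset.sum_congr rfl fun a _ => Finset.sum_congr rfl fun b _ => ?_
          rw [Finset.sum_comm]
          simp only [mul_comm]
      _ = ∑ a, ∑ b, ∑ d, ∑ d₂, star (e d d₂) * ρ (a, b, c₀, d) (a, b, c₀', d₂) := by
          simp only [he']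
      _ = ∑ d, ∑ d₂, star (e d d₂) * marCD ρ (c₀, d) (c₀', d₂) := by
          simp only [marCD, of_apply, Finset.mul_sum]
          rw [sum_rotate3]
          exact Finset.sum_congr rfl fun d _ => sum_rotate3 _
      _ = μ * star μ := by
          simp only [hCD, ← hν, Finset.mul_sum, mul_left_comm]
  have hZ : (Y - μ • 1) * R = 0 := by
    apply mul_eq_zero_of_trace hRp
    have : (Y - μ • 1) * R * (Y - μ • 1)ᴴ
        = Y * R * Yᴴ - star μ • (Y * R) - μ • (R * Yᴴ) + (μ * star μ) • R := by
      simp only [conjTranspose_sub, conjTranspose_smul, conjTranspose_one, sub_mul, mul_sub,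
        smul_mul_assoc, mul_smul_comm, one_mul, mul_one]
      rw [smul_sub, smul_smul, mul_comm μ]
      abel
    rw [this, trace_add, trace_sub, trace_sub, trace_smul, trace_smul, trace_smul, hT, hμ1, hμ2,
      hRt]
    simp only [smul_eq_mul]
    ring
  have h := congrFun (congrFun hZ p) q
  rw [sub_mul, smul_mul_assoc, one_mul, Matrix.sub_apply, hYR, Matrix.smul_apply, smul_eq_mul,
    Matrix.zero_apply] at h
  exact sub_eq_zero.1 h

/-- If `I(A:C|B) = I(B:C|A) = I(A:B|D) = I(C:D) = 0` then `ρ^{ABC} = ρ^{AB} ⊗ ρ^C`, hence the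
entropies add. -/
lemma entropy_ABC_eq (hρ : ρ.PosSemidef) (ht : ρ.trace = 1)
    (h1 : SAB ρ + SBC ρ = SABC ρ + SB ρ) (h2 : SAB ρ + SAC ρ = SABC ρ + SA ρ)
    (h3 : SAD ρ + SBD ρ = SABD ρ + SD ρ) (h4 : SC ρ + SD ρ = SCD ρ) :
    SABC ρ = SAB ρ + SC ρ := by
  obtain ⟨x, hx⟩ := exists_actB hρ h1
  obtain ⟨y, hy⟩ := exists_actA hρ h2
  obtain ⟨z, hz⟩ := exists_actD hρ h3
  have key : (marABC ρ).submatrix (Equiv.prodAssoc A B C) (Equiv.prodAssoc A B C)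
      = marAB ρ ⊗ₖ marC ρ := by
    ext ⟨p, c⟩ ⟨q, c'⟩
    obtain ⟨e, he⟩ := exists_actD_eq_actA hρ (x := x c c') (y := y c c')
      (intertwine_AB hρ fun a b a' b' => by rw [← hx, ← hy]) hz
    rw [kroneckerMap_apply, mul_comm]
    exact marABC_block_eq hρ ht (marCD_eq hρ ht h4 c c') (fun a b a' b' => hy a b c a' b' c')
      he p q
  have hS : SABC ρ = vNEntropy (marAB ρ ⊗ₖ marC ρ) := by
    rw [← key, vNEntropy_submatrix (marABC_posSemidef hρ).isHermitian]
    rfl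
  rw [hS, vNEntropy_kronecker (marAB_posSemidef hρ).isHermitian (marC_posSemidef hρ).isHermitian
    (by rw [trace_marAB, ht]) (by rw [trace_marC, ht])]
  rfl
end Intertwining

/-- **Corollary (ray II).** No quadripartite state on finite-dimensional Hilbert spaces
has entropy vector `t · (3,3,3,3,4,4,4,4,4,6,5,5,5,5,2)` for some `t > 0`
(marginals ordered `A,B,C,D,AB,AC,AD,BC,BD,CD,ABC,ABD,ACD,BCD,ABCD`). -/
theorem no_state_on_ray_II :
    ¬ ∃ (dA dB dC dD : ℕ)
        (ρ : Matrix (Fin dA × Fin dB × Fin dC × Fin dD)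
                    (Fin dA × Fin dB × Fin dC × Fin dD) ℂ)
        (t : ℝ), 0 < t ∧ IsState ρ ∧
      SA ρ = t * 3 ∧ SB ρ = t * 3 ∧ SC ρ = t * 3 ∧ SD ρ = t * 3 ∧
      SAB ρ = t * 4 ∧ SAC ρ = t * 4 ∧ SAD ρ = t * 4 ∧ SBC ρ = t * 4 ∧
      SBD ρ = t * 4 ∧ SCD ρ = t * 6 ∧ SABC ρ = t * 5 ∧ SABD ρ = t * 5 ∧
      SACD ρ = t * 5 ∧ SBCD ρ = t * 5 ∧ SABCD ρ = t * 2 := by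

  rintro ⟨dA, dB, dC, dD, ρ, t, ht, ⟨hρ, htr⟩, hA, hB, hC, hD, hAB, hAC, hAD, hBC, hBD, hCD, hABC,
    hABD, -⟩
  have := entropy_ABC_eq hρ htr (by rw [hAB, hBC, hABC, hB]; ring)
    (by rw [hAB, hAC, hABC, hA]; ring) (by rw [hAD, hBD, hABD, hD]; ring)
    (by rw [hC, hD, hCD]; ring)
  rw [hABC, hAB, hC] at this
  linarith
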